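/- arXiv:2303.16139 — 8 statements merged into one kernel-verified Lean document; each statement's English description precedes it below -/
import Mathlib

section
/- Let D_i, D_j : ℕ → ℝ be strictly increasing. Suppose there exists a relation ord : ℝ → ℝ → Prop that is response-time fair for the pair (D_i, D_j), i.e., for every y ∈ ℕ and all reals r_i, r_j > 0: if r_i < r_j then ord (D_i(y) + r_i) (D_j(y) + r_j) holds, and if r_j < r_i then ord (D_i(y) + r_i) (D_j(y) + r_j) fails. Then D_i(y) − D_i(x) = D_j(y) − D_j(x) for all x, y ∈ ℕ. (Lemma 1: when trigger points are unknown, equal inter-delivery times across participants are necessary for response time fairness; equivalently, if inter-delivery times differ, no ordering rule based only on submission times can be response-time fair.) -/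
/-!
Submission times `(s, t)` late enough for all deliveries involved can be attributed to a trigger
point `y` with response times `s - Di y` and `t - Dj y`, so fairness forces `ord s t` when
`Dj y - Di y < t - s` and forbids it when `t - s < Dj y - Di y`. If the offsets `Dj - Di` differed
at two trigger points, late submissions whose difference `t - s` lies strictly between the two
offsets would have to be ordered both ways. Hence the offset `Dj - Di` is constant.
-/

/-- Lemma 1: if there is an ordering rule (depending only on submission times)
that is response-time fair for the pair of delivery schedules `Di, Dj`, then
the inter-delivery times must agree everywhere. -/
theorem equal_inter_delivery_necessary (Di Dj : ℕ → ℝ)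
    (hDi : StrictMono Di) (hDj : StrictMono Dj)
    (ord : ℝ → ℝ → Prop)
    (hfair : ∀ (y : ℕ) (ri rj : ℝ), 0 < ri → 0 < rj →
      (ri < rj → ord (Di y + ri) (Dj y + rj)) ∧
      (rj < ri → ¬ ord (Di y + ri) (Dj y + rj))) :
    ∀ x y : ℕ, Di y - Di x = Dj y - Dj x := by
  have key : ∀ x y : ℕ, Dj y - Di y ≤ Dj x - Di x := by
    intro x y
    by_contra! h
    -- `m` lies strictly between the two offsets
    obtain ⟨m, hxm, hmy⟩ := exists_between h
    -- `s` is late enough that all four response times are positive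
    obtain ⟨s, hs⟩ := exists_gt (max (max (Di x) (Di y)) (max (Dj x - m) (Dj y - m)))
    simp only [max_lt_iff] at hs
    obtain ⟨⟨h1, h2⟩, h3, h4⟩ := hs
    have ordered := (hfair x (s - Di x) (s + m - Dj x) (by linarith) (by linarith)).1
      (by linarith)
    have not_ordered := (hfair y (s - Di y) (s + m - Dj y) (by linarith) (by linarith)).2
      (by linarith)
    simp only [add_sub_cancel] at ordered not_ordered
    exact not_ordered ordered
  intro x y
  linarith [key x y, key y x]
end

section
/- Fix δ > 0 and let D_i, D_j : ℕ → ℝ be strictly increasing. Suppose there exists a relation ord : ℝ → ℝ → Prop that is limited-horizon response-time fair with horizon δ for the pair (D_i, D_j), i.e., for every y ∈ ℕ and all reals r_i, r_j > 0: if r_i < r_j and r_i < δ then ord (D_i(y) + r_i) (D_j(y) + r_j) holds, and if r_j < r_i and r_j < δ then ord (D_i(y) + r_i) (D_j(y) + r_j) fails. Then for every x ∈ ℕ: if D_i(x+1) − D_i(x) < δ, then D_j(x+1) − D_j(x) = D_i(x+1) − D_i(x). -/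
/-!
Let `a` and `b` be the times between points `x` and `x + 1` at participants `i` and `j`.
Responses `(s, t)` to point `x + 1` have the same submission times as responses
`(a + s, b + t)` to point `x`, so `ord` must treat them alike. If `a ≠ b` and `a < δ`, small
positive `s`, `t` can be chosen so that the order of `s` and `t` is opposite to that of `a + s`
and `b + t`, with the faster response below `δ` in both readings; fairness at `x` and at `x + 1`
then contradict each other.
-/

/-- Necessary condition on delivery processes for limited-horizon response
time fairness with horizon `δ`: whenever the inter-delivery time of two
consecutive points at participant `i` is below `δ`, participant `j`'s
inter-delivery time for these points must be equal to it. -/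
theorem lrtf_equal_inter_delivery_necessary (δ : ℝ) (hδ : 0 < δ)
    (Di Dj : ℕ → ℝ) (hDi : StrictMono Di) (hDj : StrictMono Dj)
    (ord : ℝ → ℝ → Prop)
    (hfair : ∀ (y : ℕ) (ri rj : ℝ), 0 < ri → 0 < rj →
      (ri < rj → ri < δ → ord (Di y + ri) (Dj y + rj)) ∧
      (rj < ri → rj < δ → ¬ ord (Di y + ri) (Dj y + rj))) :
    ∀ x : ℕ, Di (x + 1) - Di x < δ → Dj (x + 1) - Dj x = Di (x + 1) - Di x := by
  intro x hx
  have ha := hDi (Nat.lt_succ_self x)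
  have hb := hDj (Nat.lt_succ_self x)
  simp only [Nat.succ_eq_add_one] at ha hb
  rcases lt_trichotomy (Dj (x + 1) - Dj x) (Di (x + 1) - Di x) with h | h | h
  · obtain ⟨m, hm⟩ : ∃ m, m = (Di (x + 1) - Di x) - (Dj (x + 1) - Dj x) := ⟨_, rfl⟩
    have h1 := (hfair (x + 1) (m / 4) (m / 2) (by linarith) (by linarith)).1
      (by linarith) (by linarith)
    have h2 := (hfair x (Di (x + 1) - Di x + m / 4) (Dj (x + 1) - Dj x + m / 2)
      (by linarith) (by linarith)).2 (by linarith) (by linarith)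
    refine absurd ?_ h2
    convert h1 using 1 <;> ring
  · exact h
  · -- Here the fairness condition at `x` needs `a + s < δ`, hence the second bound on `m`.
    obtain ⟨m, hm0, hm1, hm2⟩ : ∃ m, 0 < m ∧
        m ≤ (Dj (x + 1) - Dj x) - (Di (x + 1) - Di x) ∧ m ≤ δ - (Di (x + 1) - Di x) :=
      ⟨_, lt_min (by linarith) (by linarith), min_le_left _ _, min_le_right _ _⟩
    have h1 := (hfair (x + 1) (m / 2) (m / 4) (by linarith) (by linarith)).2
      (by linarith) (by linarith)
    have h2 := (hfair x (Di (x + 1) - Di x + m / 2) (Dj (x + 1) - Dj x + m / 4)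
      (by linarith) (by linarith)).1 (by linarith) (by linarith)
    refine absurd ?_ h1
    convert h2 using 1 <;> ring
end

section
/- Let D_i, D_j : ℕ → ℝ be strictly increasing, tending to infinity, and satisfying D_i(x+1) − D_i(x) = D_j(x+1) − D_j(x) for all x ∈ ℕ. Then for every x ∈ ℕ and every real r ≥ 0, the delivery clocks agree: DC_{D_i}(D_i(x) + r) = DC_{D_j}(D_j(x) + r). -/
/-!
Equal inter-delivery times force `Di` and `Dj` to differ by the constant `Di 0 - Dj 0`. The delivery
clock is invariant under translating the schedule and the query time by the same amount, and
`Di x + r` is the translate of `Dj x + r` by that constant.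
-/

/-- The index of the latest market data point delivered by time `t`:
the largest `x` with `D x ≤ t`. -/
noncomputable def lastIdx (D : ℕ → ℝ) (t : ℝ) : ℕ := sSup {x : ℕ | D x ≤ t}

/-- The delivery clock at time `t`: the pair consisting of the id of the
latest delivered data point and the time elapsed since its delivery,
ordered lexicographically. -/
noncomputable def DC (D : ℕ → ℝ) (t : ℝ) : ℕ ×ₗ ℝ :=
  toLex (lastIdx D t, t - D (lastIdx D t))

/-- If inter-delivery times are equal across two participants, a trade with a
given trigger point `x` and response time `r` receives the same delivery-clock
timestamp at either participant. -/
theorem DC_eq_of_equal_inter_delivery (Di Dj : ℕ → ℝ)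
    (hDi : StrictMono Di) (hDj : StrictMono Dj)
    (hDi_tend : Filter.Tendsto Di Filter.atTop Filter.atTop)
    (hDj_tend : Filter.Tendsto Dj Filter.atTop Filter.atTop)
    (hgap : ∀ x : ℕ, Di (x + 1) - Di x = Dj (x + 1) - Dj x)
    (x : ℕ) (r : ℝ) (hr : 0 ≤ r) :
    DC Di (Di x + r) = DC Dj (Dj x + r) := by
  -- Equal gaps mean that the two schedules differ by a constant.
  have hshift : ∀ n, Di n = Dj n + (Di 0 - Dj 0) := by
    intro n
    induction n with
    | zero => ring
    | succ n ih => linarith [hgap n]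
  -- Translating both the schedule and the query time leaves the delivered indices unchanged.
  have hidx : lastIdx Di (Di x + r) = lastIdx Dj (Dj x + r) := by
    unfold lastIdx
    congr 1
    ext n
    simp only [Set.mem_ofPred_eq]
    constructor <;> intro h <;> linarith [hshift n, hshift x]
  unfold DC
  rw [hidx]
  congr 2
  linarith [hshift x, hshift (lastIdx Dj (Dj x + r))]
end

section
/- Let D_i, D_j : ℕ → ℝ be strictly increasing, tending to infinity, and satisfying D_i(x+1) − D_i(x) = D_j(x+1) − D_j(x) for all x ∈ ℕ. Then delivery-based ordering achieves response time fairness: for every trigger point x ∈ ℕ and all response times r_i, r_j with 0 ≤ r_i < r_j, we have DC_{D_i}(D_i(x) + r_i) < DC_{D_j}(D_j(x) + r_j) in the lexicographic order on ℕ ×ₗ ℝ. -/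
/-- Equal inter-delivery times across participants imply that delivery-based
ordering achieves response time fairness: a faster trade with the same trigger
point gets a strictly smaller delivery-clock timestamp. -/
theorem DBO_fair_of_equal_inter_delivery (Di Dj : ℕ → ℝ)
    (hDi : StrictMono Di) (hDj : StrictMono Dj)
    (hDi_tend : Filter.Tendsto Di Filter.atTop Filter.atTop)
    (hDj_tend : Filter.Tendsto Dj Filter.atTop Filter.atTop)
    (hgap : ∀ x : ℕ, Di (x + 1) - Di x = Dj (x + 1) - Dj x)
    (x : ℕ) (ri rj : ℝ) (hri : 0 ≤ ri) (hij : ri < rj) :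
    DC Di (Di x + ri) < DC Dj (Dj x + rj) := by
  -- Equal gaps mean that the two schedules differ by a constant shift.
  have hshift : ∀ y, Di y - Dj y = Di 0 - Dj 0 := by
    intro y
    induction y with
    | zero => rfl
    | succ k ih => linarith [hgap k]
  have hx := hshift x
  -- After undoing the shift, every point delivered to `i` before its trade has also been
  -- delivered to `j` before its later trade.
  have hle : lastIdx Di (Di x + ri) ≤ lastIdx Dj (Dj x + rj) := by
    obtain ⟨N, hN⟩ := (hDj_tend.eventually_gt_atTop (Dj x + rj)).exists
    refine csSup_le_csSup ⟨N, fun y hy => ?_⟩ ⟨x, ?_⟩ fun y hy => ?_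
    · exact (hDj.lt_iff_lt.1 (lt_of_le_of_lt hy hN)).le
    · change Di x ≤ Di x + ri
      linarith
    · change Di y ≤ Di x + ri at hy
      change Dj y ≤ Dj x + rj
      linarith [hshift y]
  unfold DC
  rw [Prod.Lex.toLex_lt_toLex]
  rcases hle.lt_or_eq with h | h
  · exact Or.inl h
  · refine Or.inr ⟨h, ?_⟩
    simp only [h]
    linarith [hshift (lastIdx Dj (Dj x + rj))]
end

section
/- Let G : ℕ → ℝ be strictly increasing and tending to infinity, and let l_i, l_j ≥ 0 be constants. Define delivery schedules D_i(x) = G(x) + l_i and D_j(x) = G(x) + l_j (each participant receives every market data point after a fixed, participant-specific one-way latency). Then for every trigger point x ∈ ℕ and all response times r_i, r_j with 0 ≤ r_i < r_j, we have DC_{D_i}(D_i(x) + r_i) < DC_{D_j}(D_j(x) + r_j) in the lexicographic order on ℕ ×ₗ ℝ. (DBO corrects for arbitrary static differences in latency across participants and achieves response time fairness for trades of every response time.) -/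
/-- Delaying every delivery and the reading by the same `l` leaves the set of delivered
indices unchanged and cancels in the elapsed time. -/
lemma DC_add_const (G : ℕ → ℝ) (l t : ℝ) : DC (fun y => G y + l) (t + l) = DC G t := by
  simp [DC, lastIdx]

lemma lastIdx_mono {D : ℕ → ℝ} (hD : Filter.Tendsto D Filter.atTop Filter.atTop)
    {s t : ℝ} (hs : ∃ x, D x ≤ s) (hst : s ≤ t) : lastIdx D s ≤ lastIdx D t := by
  -- Boundedness of the index set is what keeps `sSup` on `ℕ` away from its junk value `0`.
  have hbdd : BddAbove {x : ℕ | D x ≤ t} := by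
    obtain ⟨N, hN⟩ := Filter.eventually_atTop.mp (hD.eventually_gt_atTop t)
    refine ⟨N, fun y hy => ?_⟩
    by_contra! h
    exact absurd (hN y h.le) (not_lt.mpr hy)
  exact csSup_le_csSup hbdd hs fun _ hy => le_trans hy hst

/-- The delivery clock is strictly increasing from the first delivery on. -/
lemma DC_lt_DC {D : ℕ → ℝ} (hD : Filter.Tendsto D Filter.atTop Filter.atTop)
    {s t : ℝ} (hs : ∃ x, D x ≤ s) (hst : s < t) : DC D s < DC D t := by
  rw [DC, DC, Prod.Lex.toLex_lt_toLex]
  rcases (lastIdx_mono hD hs hst.le).lt_or_eq with h | h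
  · exact Or.inl h
  · exact Or.inr ⟨h, by simpa [h] using hst⟩

/-- DBO corrects for arbitrary static differences in one-way latency across
participants: with delivery schedules `Di x = G x + li` and `Dj x = G x + lj`,
the faster trade with the same trigger point gets a strictly smaller
delivery-clock timestamp, for every response time. -/
theorem DBO_fair_static_latency (G : ℕ → ℝ) (hG : StrictMono G)
    (hG_tend : Filter.Tendsto G Filter.atTop Filter.atTop)
    (li lj : ℝ) (hli : 0 ≤ li) (hlj : 0 ≤ lj)
    (x : ℕ) (ri rj : ℝ) (hri : 0 ≤ ri) (hij : ri < rj) :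
    DC (fun y => G y + li) ((G x + li) + ri) <
      DC (fun y => G y + lj) ((G x + lj) + rj) := by
  rw [add_right_comm (G x) li, add_right_comm (G x) lj, DC_add_const, DC_add_const]
  exact DC_lt_DC hG_tend ⟨x, by linarith⟩ (by linarith)
end

section
/- Fix δ > 0. Let b : ℕ → ℕ be monotone nondecreasing (point x belongs to batch b(x)), and for participants i and j let T_i, T_j : ℕ → ℝ satisfy T_p(k+1) ≥ T_p(k) + δ for all k. Define D_p(x) = T_p(b(x)). Then for every x ∈ ℕ: if D_i(x+1) − D_i(x) < δ, then b(x+1) = b(x), and consequently D_j(x+1) = D_j(x) and D_i(x+1) = D_i(x). (Batched delivery with inter-batch gaps of at least δ satisfies the necessary delivery condition for limited-horizon response time fairness: any two consecutive points whose inter-delivery time at one participant is below δ are delivered simultaneously at every participant.) -/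
/-- Batched delivery with inter-batch gaps at least `δ` satisfies the
necessary delivery condition for limited-horizon response time fairness:
if the inter-delivery time of consecutive points at participant `i` is below
`δ`, then the two points are in the same batch, and hence are delivered
simultaneously at every participant. -/
theorem batched_delivery_lrtf_condition (δ : ℝ) (hδ : 0 < δ)
    (b : ℕ → ℕ) (hb : Monotone b)
    (Ti Tj : ℕ → ℝ)
    (hTi : ∀ k : ℕ, Ti k + δ ≤ Ti (k + 1))
    (hTj : ∀ k : ℕ, Tj k + δ ≤ Tj (k + 1)) :
    ∀ x : ℕ, Ti (b (x + 1)) - Ti (b x) < δ →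
      b (x + 1) = b x ∧ Tj (b (x + 1)) = Tj (b x) ∧ Ti (b (x + 1)) = Ti (b x) := by
  intro x hx
  have hmono : Monotone Ti := monotone_nat_of_le_succ fun k => by linarith [hTi k]
  have hbx : b (x + 1) = b x := by
    by_contra hne
    -- A batch change skips to at least the next batch, which costs a full gap `δ`.
    have hlt : b x + 1 ≤ b (x + 1) := lt_of_le_of_ne (hb x.le_succ) (Ne.symm hne)
    linarith [hTi (b x), hmono hlt]
  simp [hbx]
end

section
/- Fix δ > 0 and reals 0 ≤ Bl_i ≤ Bh_i and 0 ≤ Bl_j ≤ Bh_j. Let b : ℕ → ℕ be monotone nondecreasing with b(x) → ∞, let T_i, T_j : ℕ → ℝ satisfy T_p(k+1) ≥ T_p(k) + δ for all k, and define D_p(x) = T_p(b(x)). Consider two competing trades with common trigger point x ∈ ℕ, true response times r_i, r_j > 0, and round-trip release-buffer-to-participant latencies L_i ∈ [Bl_i, Bh_i] and L_j ∈ [Bl_j, Bh_j], observed at the release buffers at submission times Ŝ_i = D_i(x) + r_i + L_i and Ŝ_j = D_j(x) + r_j + L_j. If r_i < δ − Bh_i and r_i < r_j − (Bh_i − Bl_j),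 then DC_{D_i}(Ŝ_i) < DC_{D_j}(Ŝ_j) in the lexicographic order on ℕ ×ₗ ℝ. (With delivery-based ordering, a trade with response time less than δ − Bh_i is ordered fairly ahead of any competing trade that is slower by more than the latency uncertainty Bh_i − Bl_j.) -/
/-- The supremum defining `lastIdx` is over a bounded set: batch spacing forces
`T k ≥ T 0 + k δ`, so only finitely many batches, hence points, are delivered by time `t`. -/
lemma bddAbove_delivered {δ : ℝ} (hδ : 0 < δ) {b : ℕ → ℕ}
    (hb_tend : Filter.Tendsto b Filter.atTop Filter.atTop) {T : ℕ → ℝ}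
    (hT : ∀ k : ℕ, T k + δ ≤ T (k + 1)) (t : ℝ) :
    BddAbove {y : ℕ | T (b y) ≤ t} := by
  have hlin : ∀ k : ℕ, T 0 + k * δ ≤ T k := by
    intro k
    induction k with
    | zero => simp
    | succ k ih =>
      have := hT k
      push_cast
      linarith
  obtain ⟨K, hK⟩ := exists_nat_gt ((t - T 0) / δ)
  rw [div_lt_iff₀ hδ] at hK
  obtain ⟨N, hN⟩ := Filter.eventually_atTop.1 (hb_tend.eventually_ge_atTop K)
  refine ⟨N, fun y hy => ?_⟩
  by_contra! hlt
  have hKb : (K : ℝ) ≤ b y := by exact_mod_cast hN y hlt.le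
  have hmul := mul_le_mul_of_nonneg_right hKb hδ.le
  have hl := hlin (b y)
  have hy' : T (b y) ≤ t := hy
  linarith

/-- DBO fairness with non-colocated release buffers: with batched delivery and
round-trip release-buffer-to-participant latencies bounded in
`[Bli, Bhi]` and `[Blj, Bhj]`, a trade of participant `i` with response time
below `δ - Bhi` is ordered ahead of any competing trade of participant `j`
that is slower by more than the latency uncertainty `Bhi - Blj`. -/
theorem DBO_fair_noncolocated_RB (δ : ℝ) (hδ : 0 < δ)
    (Bli Bhi Blj Bhj : ℝ)
    (hBli : 0 ≤ Bli) (hBi : Bli ≤ Bhi) (hBlj : 0 ≤ Blj) (hBj : Blj ≤ Bhj)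
    (b : ℕ → ℕ) (hb : Monotone b)
    (hb_tend : Filter.Tendsto b Filter.atTop Filter.atTop)
    (Ti Tj : ℕ → ℝ)
    (hTi : ∀ k : ℕ, Ti k + δ ≤ Ti (k + 1))
    (hTj : ∀ k : ℕ, Tj k + δ ≤ Tj (k + 1))
    (x : ℕ) (ri rj : ℝ) (hri : 0 < ri) (hrj : 0 < rj)
    (Li Lj : ℝ)
    (hLi_lo : Bli ≤ Li) (hLi_hi : Li ≤ Bhi)
    (hLj_lo : Blj ≤ Lj) (hLj_hi : Lj ≤ Bhj)
    (hriδ : ri < δ - Bhi) (hij : ri < rj - (Bhi - Blj)) :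
    DC (fun y => Ti (b y)) (Ti (b x) + ri + Li) <
      DC (fun y => Tj (b y)) (Tj (b x) + rj + Lj) := by
  have hTi_mono : Monotone Ti := monotone_nat_of_le_succ fun k => by linarith [hTi k]
  have hTj_mono : Monotone Tj := monotone_nat_of_le_succ fun k => by linarith [hTj k]
  have hbddi := bddAbove_delivered hδ hb_tend hTi (Ti (b x) + ri + Li)
  have hbddj := bddAbove_delivered hδ hb_tend hTj (Tj (b x) + rj + Lj)
  have hxi : x ∈ {y : ℕ | Ti (b y) ≤ Ti (b x) + ri + Li} := by
    simp only [Set.mem_setOf_eq]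
    linarith
  -- batch `b x + 1` arrives at `i` only after the trade, since `ri + Li < δ`
  have hbatch : ∀ y ∈ {y : ℕ | Ti (b y) ≤ Ti (b x) + ri + Li}, b y ≤ b x := by
    intro y hy
    by_contra! hlt
    have h1 : Ti (b x + 1) ≤ Ti (b y) := hTi_mono hlt
    have h2 := hTi (b x)
    have hy' : Ti (b y) ≤ Ti (b x) + ri + Li := hy
    linarith
  have hle : lastIdx (fun y => Ti (b y)) (Ti (b x) + ri + Li) ≤
      lastIdx (fun y => Tj (b y)) (Tj (b x) + rj + Lj) := by
    refine csSup_le_csSup hbddj ⟨x, hxi⟩ fun y hy => ?_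
    have h1 : Tj (b y) ≤ Tj (b x) := hTj_mono (hbatch y hy)
    simp only [Set.mem_setOf_eq]
    linarith
  have hbi : b (lastIdx (fun y => Ti (b y)) (Ti (b x) + ri + Li)) = b x :=
    le_antisymm (hbatch _ (Nat.sSup_mem ⟨x, hxi⟩ hbddi)) (hb (le_csSup hbddi hxi))
  rw [DC, DC, Prod.Lex.toLex_lt_toLex]
  rcases hle.lt_or_eq with hlt | heq
  · exact Or.inl hlt
  · refine Or.inr ⟨heq, ?_⟩
    simp only [← heq, hbi]
    linarith
end

section
/- Let D_i, D_j : ℕ → ℝ be strictly increasing and suppose there exist x, y ∈ ℕ with D_i(y) − D_i(x) ≠ D_j(y) − D_j(x). Then there is no relation ord : ℝ → ℝ → Prop that is response-time fair for the pair (D_i, D_j), i.e., no ord such that for every trigger point z ∈ ℕ and all reals r_i, r_j > 0: r_i < r_j implies ord (D_i(z) + r_i) (D_j(z) + r_j) holds, and r_j < r_i implies ord (D_i(z) + r_i) (D_j(z) + r_j) fails. (Theorem 1: if trigger points are unknown and inter-delivery times across participants differ anywhere, no ordering system based only on submission times achieves response time fairness.) -/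
/-!
Let `a = Di y - Di x` and `b = Dj y - Dj x`. Reading a fixed pair of submission times as triggered
by `y` instead of `x` changes the gap `rj - ri` between the response times by `a - b ≠ 0`. A pair
whose gap is `(b - a) / 2` under `x` therefore has gap `-(b - a) / 2` under `y`: the faster
participant depends on the trigger point, so fairness demands opposite verdicts on the same pair.
-/

/-- Theorem 1: if trigger points are unknown and inter-delivery times across
participants differ anywhere, then no ordering rule based only on submission
times achieves response time fairness. -/
theorem no_fair_ordering_of_unequal_inter_delivery (Di Dj : ℕ → ℝ)
    (hDi : StrictMono Di) (hDj : StrictMono Dj)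
    (x y : ℕ) (hne : Di y - Di x ≠ Dj y - Dj x) :
    ¬ ∃ ord : ℝ → ℝ → Prop,
      ∀ (z : ℕ) (ri rj : ℝ), 0 < ri → 0 < rj →
        (ri < rj → ord (Di z + ri) (Dj z + rj)) ∧
        (rj < ri → ¬ ord (Di z + ri) (Dj z + rj)) := by
  rintro ⟨ord, h⟩
  obtain ⟨a, ha⟩ : ∃ a, a = Di y - Di x := ⟨_, rfl⟩
  obtain ⟨b, hb⟩ : ∃ b, b = Dj y - Dj x := ⟨_, rfl⟩
  rw [← ha, ← hb] at hne
  -- `M` is large enough to make all four response times below positive.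
  obtain ⟨M, hM⟩ : ∃ M, M = |a| + |b| + 1 := ⟨_, rfl⟩
  have ha1 := le_abs_self a
  have ha2 := neg_abs_le a
  have hb1 := le_abs_self b
  have hb2 := neg_abs_le b
  have hx := h x M (M + (b - a) / 2) (by linarith) (by linarith)
  have hy := h y (M - a) (M - (a + b) / 2) (by linarith) (by linarith)
  have e1 : Di y + (M - a) = Di x + M := by linarith
  have e2 : Dj y + (M - (a + b) / 2) = Dj x + (M + (b - a) / 2) := by linarith
  rw [e1, e2] at hy
  rcases lt_or_gt_of_ne hne with hlt | hlt
  · exact hy.2 (by linarith) (hx.1 (by linarith))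
  · exact hx.2 (by linarith) (hy.1 (by linarith))
end
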